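/- Let G be a branch group acting on a rooted tree T. Then for each vertex v of T the rigid stabilizer rist_G(v) is not virtually soluble. -/

import Mathlib

/-!  Common definitions: rooted trees of type `(m n)`, tree automorphisms,
rigid stabilizers, branch groups, and auxiliary notions. -/

universe u

/-- Vertices of the rooted tree of type `m`: finite sequences `(x_0, …, x_{n-1})`
with `x_i ∈ {1, …, m i}` (encoded as `Fin (m i)`). -/
def Vertex (m : ℕ → ℕ) : Type := Σ n : ℕ, ∀ i : Fin n, Fin (m i)

namespace Vertex

variable {m : ℕ → ℕ}

/-- The level of a vertex: its length. -/
def level (v : Vertex m) : ℕ := v.1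

/-- `v` is a (weak) prefix of `w`; i.e. `w` lies in the subtree `T_v`
(`w = v` or `w` is a descendant of `v`). -/
def IsPrefix (v w : Vertex m) : Prop :=
  ∃ h : v.1 ≤ w.1, ∀ i : Fin v.1, w.2 (Fin.castLE h i) = v.2 i

/-- `w` is a child (one-step extension) of `v`. -/
def IsChild (v w : Vertex m) : Prop := w.1 = v.1 + 1 ∧ IsPrefix v w

end Vertex

/-- The `n`-th layer `L_n` of the tree: all vertices of level `n`. -/
def layer (m : ℕ → ℕ) (n : ℕ) : Set (Vertex m) := {v | v.1 = n}

section Rist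

variable {m : ℕ → ℕ} (G : Type*) [Group G] [MulAction G (Vertex m)]

/-- The rigid stabilizer of a vertex `v`: all elements fixing every vertex
outside the subtree `T_v`. -/
def rist (v : Vertex m) : Subgroup G :=
  ⨅ w ∈ {w : Vertex m | ¬ Vertex.IsPrefix v w}, MulAction.stabilizer G w

/-- The subgroup generated by the rigid stabilizers of the vertices in `X`. -/
def ristSet (X : Set (Vertex m)) : Subgroup G := ⨆ v ∈ X, rist G v

/-- `rist_G(n)`, the rigid stabilizer of the `n`-th layer. -/
def ristLayer (m : ℕ → ℕ) (G : Type*) [Group G] [MulAction G (Vertex m)] (n : ℕ) :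
    Subgroup G :=
  ristSet G (layer m n)

/-- The orbit of the vertex `v` under a subgroup `H ≤ G`. -/
def subOrbit (H : Subgroup G) (v : Vertex m) : Set (Vertex m) :=
  {w | ∃ h ∈ H, h • v = w}

/-- The set of orbits of a subgroup `H ≤ G` on a set `X` of vertices. -/
def orbitsOn (H : Subgroup G) (X : Set (Vertex m)) : Set (Set (Vertex m)) :=
  (fun v => subOrbit G H v) '' X

end Rist

/-- `G` is a branch group on the rooted tree of type `m` (with respect to the given
action): the action is faithful and by tree automorphisms, `G` acts transitively on
each layer, and each `rist_G(n)` has finite index in `G`. -/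
structure IsBranchGroup (m : ℕ → ℕ) (G : Type*) [Group G] [MulAction G (Vertex m)] :
    Prop where
  faithful : ∀ g : G, (∀ v : Vertex m, g • v = v) → g = 1
  aut : ∀ (g : G) (v w : Vertex m), Vertex.IsChild v w ↔ Vertex.IsChild (g • v) (g • w)
  trans : ∀ v w : Vertex m, v.1 = w.1 → ∃ g : G, g • v = w
  ristFiniteIndex : ∀ n : ℕ, (ristLayer m G n).FiniteIndex

/-- A group is virtually soluble if it has a soluble subgroup of finite index. -/
def VirtuallySolvable (Γ : Type*) [Group Γ] : Prop :=
  ∃ S : Subgroup Γ, S.FiniteIndex ∧ IsSolvable ↥S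

/-- A group is virtually abelian if it has an abelian subgroup of finite index. -/
def VirtuallyAbelian (Γ : Type*) [Group Γ] : Prop :=
  ∃ S : Subgroup Γ, S.FiniteIndex ∧ ∀ a ∈ S, ∀ b ∈ S, a * b = b * a

/-- For subgroups `A ≤ B` of a group with `A` normalised by `B`, this says that the
factor `B/A` belongs to the class `𝔛`. -/
def FactorIn (𝔛 : (Γ : Type u) → [inst : Group Γ] → Prop) {G : Type u} [Group G]
    (A B : Subgroup G) : Prop :=
  ∃ hn : (A.subgroupOf B).Normal, letI := hn; 𝔛 (↥B ⧸ A.subgroupOf B)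

/-- The factor `B/A` is virtually soluble. -/
def FactorVirtuallySolvable {G : Type*} [Group G] (A B : Subgroup G) : Prop :=
  ∃ hn : (A.subgroupOf B).Normal,
    letI := hn; VirtuallySolvable (↥B ⧸ A.subgroupOf B)

/-- The factor `B/A` is virtually abelian. -/
def FactorVirtuallyAbelian {G : Type*} [Group G] (A B : Subgroup G) : Prop :=
  ∃ hn : (A.subgroupOf B).Normal,
    letI := hn; VirtuallyAbelian (↥B ⧸ A.subgroupOf B)

/-- `Γ` has `r` infinite normal subgroups that generate their direct product in `Γ`:
each of them intersects trivially the subgroup generated by the others. -/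
def HasIndepFamily (Γ : Type*) [Group Γ] (r : ℕ) : Prop :=
  ∃ N : Fin r → Subgroup Γ, (∀ i, (N i).Normal) ∧ (∀ i, Infinite ↥(N i)) ∧
    ∀ i, N i ⊓ (⨆ j ∈ ({i}ᶜ : Set (Fin r)), N j) = ⊥

section Aux

variable {m : ℕ → ℕ}

theorem Vertex.prefix_refl (v : Vertex m) : Vertex.IsPrefix v v :=
  ⟨le_refl _, fun _ => rfl⟩

theorem Vertex.prefix_trans {u v w : Vertex m} (h1 : Vertex.IsPrefix u v)
    (h2 : Vertex.IsPrefix v w) : Vertex.IsPrefix u w := by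
  obtain ⟨a, ha⟩ := h1
  obtain ⟨b, hb⟩ := h2
  refine ⟨a.trans b, fun i => ?_⟩
  rw [← ha i, ← hb]
  rfl

theorem Vertex.eq_of_prefix {x v w : Vertex m} (h : v.1 = w.1)
    (h1 : Vertex.IsPrefix v x) (h2 : Vertex.IsPrefix w x) : v = w := by
  obtain ⟨n, v⟩ := v
  obtain ⟨k, w⟩ := w
  dsimp only at h
  subst h
  obtain ⟨a, ha⟩ := h1
  obtain ⟨b, hb⟩ := h2
  have : v = w := by
    funext i
    exact (ha i).symm.trans (hb i)
  rw [this]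

theorem Vertex.exists_trunc (w : Vertex m) (k : ℕ) (hk : k ≤ w.1) :
    ∃ p : Vertex m, p.1 = k ∧ Vertex.IsPrefix p w :=
  ⟨⟨k, fun i => w.2 (Fin.castLE hk i)⟩, rfl, hk, fun _ => rfl⟩

theorem Vertex.prefix_of_prefix {x v w : Vertex m} (h : v.1 ≤ w.1)
    (h1 : Vertex.IsPrefix v x) (h2 : Vertex.IsPrefix w x) : Vertex.IsPrefix v w := by
  obtain ⟨p, hp, hpw⟩ := Vertex.exists_trunc w v.1 h
  have := Vertex.eq_of_prefix hp (Vertex.prefix_trans hpw h2) h1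
  rwa [← this]

theorem Vertex.exists_parent (w : Vertex m) (n : ℕ) (h : w.1 = n + 1) :
    ∃ p : Vertex m, p.1 = n ∧ Vertex.IsChild p w := by
  obtain ⟨p, hp, hpw⟩ := Vertex.exists_trunc w n (by omega)
  exact ⟨p, hp, by omega, hpw⟩

theorem Vertex.exists_below (hm : ∀ n, 2 ≤ m n) (v : Vertex m) (n : ℕ) (h : v.1 ≤ n) :
    ∃ w : Vertex m, w.1 = n ∧ Vertex.IsPrefix v w := by
  refine ⟨⟨n, fun i => if hi : i.1 < v.1 then v.2 ⟨i.1, hi⟩ else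
    ⟨0, by have := hm i.1; omega⟩⟩, rfl, h, fun i => ?_⟩
  simp

variable {G : Type*} [Group G] [MulAction G (Vertex m)]

theorem mem_rist {v : Vertex m} {g : G} :
    g ∈ rist G v ↔ ∀ w, ¬ Vertex.IsPrefix v w → g • w = w := by
  simp [rist, Subgroup.mem_iInf]

theorem rist_mono {v w : Vertex m} (h : Vertex.IsPrefix v w) : rist G w ≤ rist G v := by
  intro g hg
  rw [mem_rist] at *
  exact fun x hx => hg x fun h' => hx (Vertex.prefix_trans h h')

theorem IsBranchGroup.level_smul (hG : IsBranchGroup m G) (g : G) (n : ℕ) :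
    ∀ w : Vertex m, w.1 = n → (g • w).1 = n := by
  induction n with
  | zero =>
    intro w hw
    by_contra h
    obtain ⟨k, hk⟩ := Nat.exists_eq_succ_of_ne_zero h
    obtain ⟨p, _, hp⟩ := Vertex.exists_parent _ k hk
    rw [hG.aut g⁻¹, inv_smul_smul] at hp
    have := hp.1
    omega
  | succ n ih =>
    intro w hw
    obtain ⟨p, hp, hc⟩ := Vertex.exists_parent w n hw
    rw [hG.aut g] at hc
    rw [hc.1, ih p hp]

theorem IsBranchGroup.prefix_smul (hG : IsBranchGroup m G) (g : G) (v : Vertex m) (n : ℕ) :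
    ∀ w : Vertex m, w.1 = v.1 + n → Vertex.IsPrefix v w →
      Vertex.IsPrefix (g • v) (g • w) := by
  induction n with
  | zero =>
    intro w hw h
    rw [Vertex.eq_of_prefix hw (Vertex.prefix_refl w) h]
    exact Vertex.prefix_refl _
  | succ n ih =>
    intro w hw h
    obtain ⟨p, hp, hc⟩ := Vertex.exists_parent w (v.1 + n) hw
    have h1 := ih p hp (Vertex.prefix_of_prefix (by omega) h hc.2)
    rw [hG.aut g] at hc
    exact Vertex.prefix_trans h1 hc.2

theorem IsBranchGroup.conj_mem (hG : IsBranchGroup m G) (g : G) {v : Vertex m} {a : G}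
    (ha : a ∈ rist G v) : g * a * g⁻¹ ∈ rist G (g • v) := by
  rw [mem_rist] at *
  intro w hw
  have : a • g⁻¹ • w = g⁻¹ • w := by
    apply ha
    intro h
    apply hw
    have := hG.prefix_smul g v ((g⁻¹ • w).1 - v.1) _ (by have := h.1; omega) h
    rwa [smul_inv_smul] at this
  rw [mul_smul, mul_smul, this, smul_inv_smul]

theorem IsBranchGroup.disj (hG : IsBranchGroup m G) {v w : Vertex m} (h : v.1 = w.1)
    (hne : v ≠ w) {a : G} (h1 : a ∈ rist G v) (h2 : a ∈ rist G w) : a = 1 := by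
  apply hG.faithful
  intro x
  rw [mem_rist] at *
  by_cases hx : Vertex.IsPrefix v x
  · exact h2 x fun h' => hne (Vertex.eq_of_prefix h hx h')
  · exact h1 x hx

theorem IsBranchGroup.comm (hG : IsBranchGroup m G) {v w : Vertex m} (h : v.1 = w.1)
    (hne : v ≠ w) {a b : G} (ha : a ∈ rist G v) (hb : b ∈ rist G w) : a * b = b * a := by
  have haw : a • w = w := mem_rist.1 ha w fun h' =>
    hne (Vertex.eq_of_prefix h h' (Vertex.prefix_refl w))
  have hbv : b • v = v := mem_rist.1 hb v fun h' =>
    hne (Vertex.eq_of_prefix h (Vertex.prefix_refl v) h')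
  have h1 := hG.conj_mem a hb
  have h2 := hG.conj_mem b (inv_mem ha)
  rw [haw] at h1
  rw [hbv] at h2
  have h3 := hG.disj h hne (a := a * b * a⁻¹ * b⁻¹)
    (by have := mul_mem ha h2; simpa only [mul_assoc] using this)
    (mul_mem h1 (inv_mem hb))
  rw [mul_inv_eq_one, mul_inv_eq_iff_eq_mul] at h3
  exact h3

theorem IsBranchGroup.infinite (hm : ∀ n, 2 ≤ m n) (hG : IsBranchGroup m G) : Infinite G := by
  by_contra hf
  rw [not_infinite_iff_finite] at hf
  let n := Nat.card G + 1
  let f : Fin n → Vertex m := fun j => ⟨n, fun i => if i = j then ⟨1, hm i⟩ else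
    ⟨0, by have := hm i; omega⟩⟩
  have hf' : Function.Injective f := by
    intro j k hjk
    have h2 := eq_of_heq (Sigma.mk.inj hjk).2
    have h3 := congrFun h2 j
    by_contra hne
    simp [hne] at h3
  choose g hg using fun j : Fin n => hG.trans (f 0) (f j) rfl
  have hinj : Function.Injective g := by
    intro j k h
    apply hf'
    rw [← hg j, ← hg k, h]
  have := Nat.card_le_card_of_injective g hinj
  simp [n] at this

theorem IsBranchGroup.rist_ne_bot (hm : ∀ n, 2 ≤ m n) (hG : IsBranchGroup m G)
    (v : Vertex m) : rist G v ≠ ⊥ := by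
  intro h
  have h1 : ristLayer m G v.1 = ⊥ := by
    rw [ristLayer, ristSet, eq_bot_iff]
    refine iSup₂_le fun w hw => ?_
    intro a ha
    obtain ⟨g, hg⟩ := hG.trans w v hw
    have h2 := hG.conj_mem g ha
    rw [hg, h, Subgroup.mem_bot, conj_eq_one_iff] at h2
    exact h2
  have h2 := (hG.ristFiniteIndex v.1).index_ne_zero
  have := hG.infinite hm
  rw [h1, Subgroup.index_bot] at h2
  exact h2 Nat.card_eq_zero_of_infinite

theorem IsBranchGroup.rist_infinite (hm : ∀ n, 2 ≤ m n) (hG : IsBranchGroup m G)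
    (v : Vertex m) : Infinite (rist G v) := by
  by_contra hf
  rw [not_infinite_iff_finite] at hf
  have hmv : ∀ g : rist G v, ∃ x : Vertex m, (g : G) ≠ 1 → (g : G) • x ≠ x := by
    intro g
    by_cases hg : (g : G) = 1
    · exact ⟨v, fun h => absurd hg h⟩
    · by_contra! h
      exact hg (hG.faithful _ fun x => (h x).2)
  choose x hx using hmv
  obtain ⟨N, hN⟩ := (Set.finite_range fun g => (x g).1).bddAbove
  obtain ⟨w, hw, hvw⟩ := Vertex.exists_below hm v (v.1 + N + 1) (by omega)
  apply hG.rist_ne_bot hm w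
  rw [eq_bot_iff]
  intro a ha
  by_contra h1
  have hav := rist_mono hvw ha
  refine hx ⟨a, hav⟩ h1 (mem_rist.1 ha _ fun h => ?_)
  have h2 := h.1
  have h3 : (x ⟨a, hav⟩).1 ≤ N := hN ⟨_, rfl⟩
  omega

theorem IsBranchGroup.exists_ne_one (hm : ∀ n, 2 ≤ m n) (hG : IsBranchGroup m G)
    (v : Vertex m) (S : Subgroup G) (hS : S.relIndex (rist G v) ≠ 0) :
    ∃ a ∈ S, a ∈ rist G v ∧ a ≠ 1 := by
  by_contra! h
  have h1 : S.subgroupOf (rist G v) = ⊥ := by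
    rw [eq_bot_iff]
    intro a ha
    exact Subtype.ext (h a ha a.2)
  have := hG.rist_infinite hm v
  rw [Subgroup.relIndex, h1, Subgroup.index_bot] at hS
  exact hS Nat.card_eq_zero_of_infinite

theorem IsBranchGroup.exists_moved (hG : IsBranchGroup m G)
    {v : Vertex m} {g : G} (hg : g ∈ rist G v) (h1 : g ≠ 1) :
    ∃ w, Vertex.IsPrefix v w ∧ w ≠ g • w ∧ w.1 = (g • w).1 := by
  by_contra! h
  refine h1 (hG.faithful g fun w => ?_)
  by_cases hw : Vertex.IsPrefix v w
  · by_contra hne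
    exact h w hw (Ne.symm hne) (hG.level_smul g _ w rfl).symm
  · exact mem_rist.1 hg w hw

theorem relIndex_below {v w : Vertex m} (h : Vertex.IsPrefix v w) {S : Subgroup G}
    (hS : S.relIndex (rist G v) ≠ 0) : S.relIndex (rist G w) ≠ 0 :=
  fun h0 => hS (Subgroup.relIndex_eq_zero_of_le_right (rist_mono h) h0)

theorem IsBranchGroup.exists_not_comm (hm : ∀ n, 2 ≤ m n) (hG : IsBranchGroup m G)
    (v : Vertex m) (S : Subgroup G) (hS : S.relIndex (rist G v) ≠ 0) :
    ∃ a ∈ S, ∃ b ∈ S, a ∈ rist G v ∧ b ∈ rist G v ∧ a * b ≠ b * a := by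
  obtain ⟨g, hgS, hgv, hg1⟩ := hG.exists_ne_one hm v S hS
  obtain ⟨w, hvw, hne, hl⟩ := hG.exists_moved hgv hg1
  obtain ⟨a, haS, haw, ha1⟩ := hG.exists_ne_one hm w S (relIndex_below hvw hS)
  refine ⟨g, hgS, a, haS, hgv, rist_mono hvw haw, fun h => ha1 ?_⟩
  have h2 := hG.conj_mem g haw
  rw [h, mul_inv_cancel_right] at h2
  exact hG.disj hl hne haw h2

theorem IsBranchGroup.abelian_normal (hm : ∀ n, 2 ≤ m n) (hG : IsBranchGroup m G)
    (v : Vertex m) (S : Subgroup G) (hS : S.relIndex (rist G v) ≠ 0)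
    (g : G) (hg : g ∈ rist G v)
    (hcomm : ∀ a ∈ S, ∀ b ∈ S,
      (a * (g * a⁻¹ * g⁻¹)) * (b * (g * b⁻¹ * g⁻¹)) =
      (b * (g * b⁻¹ * g⁻¹)) * (a * (g * a⁻¹ * g⁻¹))) : g = 1 := by
  by_contra hg1
  obtain ⟨w, hvw, hne, hl⟩ := hG.exists_moved hg hg1
  obtain ⟨a, haS, b, hbS, ha, hb, hab⟩ := hG.exists_not_comm hm w S (relIndex_below hvw hS)
  apply hab
  have h := hcomm a haS b hbS
  have hc := hG.conj_mem g (inv_mem ha)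
  have hd := hG.conj_mem g (inv_mem hb)
  generalize g * a⁻¹ * g⁻¹ = c at *
  generalize g * b⁻¹ * g⁻¹ = d at *
  have e1 : (a * c) * (b * d) = (a * b) * (c * d) := by
    rw [mul_assoc, ← mul_assoc c, ← hG.comm hl hne hb hc]; group
  have e2 : (b * d) * (a * c) = (b * a) * (d * c) := by
    rw [mul_assoc, ← mul_assoc d, ← hG.comm hl hne ha hd]; group
  rw [e1, e2] at h
  have h3 : (b * a)⁻¹ * (a * b) = (d * c) * (c * d)⁻¹ := by
    rw [eq_mul_inv_iff_mul_eq, mul_assoc, h, inv_mul_cancel_left]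
  have h4 := hG.disj hl hne (a := (b * a)⁻¹ * (a * b))
    (mul_mem (inv_mem (mul_mem hb ha)) (mul_mem ha hb))
    (h3 ▸ mul_mem (mul_mem hd hc) (inv_mem (mul_mem hc hd)))
  exact (inv_mul_eq_one.1 h4).symm

end Aux

/-- **Lemma.** If `G` is a branch group on `T`, then for every vertex `v` the rigid
stabilizer `rist_G(v)` is not virtually soluble. -/
theorem rist_not_virtually_solvable
    (m : ℕ → ℕ) (hm : ∀ n, 2 ≤ m n)
    (G : Type*) [Group G] [MulAction G (Vertex m)] (hG : IsBranchGroup m G)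
    (v : Vertex m) :
    ¬ VirtuallySolvable ↥(rist G v) := by
  rintro ⟨S, hS, hsol⟩
  have hrel : (S.map (rist G v).subtype).relIndex (rist G v) ≠ 0 := by
    have : (S.map (rist G v).subtype).subgroupOf (rist G v) = S :=
      Subgroup.comap_map_eq_self_of_injective (Subgroup.subtype_injective _) S
    rw [Subgroup.relIndex, this]
    exact hS.index_ne_zero
  have key : ∀ k, derivedSeries S k = ⊥ → derivedSeries S 0 = ⊥ := by
    intro k
    induction k with
    | zero => exact id
    | succ k ih =>
      intro h
      apply ih
      rw [derivedSeries_succ, Subgroup.commutator_eq_bot_iff_le_centralizer] at h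
      rw [eq_bot_iff]
      intro g hg
      have hn : (derivedSeries S k).Normal := inferInstance
      have hmem : ∀ a : S, a * (g * a⁻¹ * g⁻¹) ∈ derivedSeries S k := fun a => by
        have := mul_mem (hn.conj_mem g hg a) (inv_mem hg)
        simpa only [mul_assoc] using this
      have h1 : ((g : rist G v) : G) = 1 := by
        refine hG.abelian_normal hm v _ hrel _ g.1.2 ?_
        rintro _ ⟨a, ha, rfl⟩ _ ⟨b, hb, rfl⟩
        have h2 := Subgroup.mem_centralizer_iff.1 (h (hmem ⟨b, hb⟩)) _ (hmem ⟨a, ha⟩)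
        exact congrArg (fun z : S => ((z : rist G v) : G)) h2
      exact Subtype.ext (Subtype.ext h1)
  obtain ⟨k, hk⟩ := hsol.solvable
  have h0 := key k hk
  obtain ⟨a, ⟨b, hb, rfl⟩, _, hne⟩ := hG.exists_ne_one hm v _ hrel
  apply hne
  have h3 : (⟨b, hb⟩ : S) ∈ derivedSeries S 0 := by
    rw [derivedSeries_zero]; trivial
  rw [h0, Subgroup.mem_bot] at h3
  exact congrArg (fun z : S => ((z : rist G v) : G)) h3
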